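/- arXiv:2207.05625 — 3 statements merged into one kernel-verified Lean document; each statement's English description precedes it below -/
import Mathlib

section
/- Let f : ℝ → ℝ be twice differentiable on [0,1] satisfying the S-shape assumption: f(0) = 0, f(1) = 1, f′(0) = f′(1) = 0, f′(s) > 0 for 0 < s < 1, and there is s* ∈ (0,1) with f″(s) > 0 for 0 < s < s* and f″(s) < 0 for s* < s < 1; moreover there exist s^{†,1} ∈ (0, s*) and s^{†,2} ∈ (s*, 1) with f′(s^{†,1}) = f′(s^{†,2}) = 1. Then for every real Λ with Λ < 0 or Λ > 1, the secant slope from (Λ, Λ) to (s*, f(s*)) is strictly smaller than the tangent slope at s*, i.e. f′(s*) > (f(s*) − Λ)/(s* − Λ). -/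
/-- Sign condition in Lemma 4.2: for an S-shaped fractional flow `f` with
inflection point `s*`, and any `Λ < 0` or `Λ > 1`, the secant slope from
`(Λ, Λ)` to `(s*, f(s*))` is strictly smaller than the tangent slope at `s*`. -/
theorem secant_lt_tangent_at_inflection (f : ℝ → ℝ) (sstar : ℝ)
    (hdiff : ∀ s ∈ Set.Icc (0 : ℝ) 1, DifferentiableAt ℝ f s)
    (hdiff2 : ∀ s ∈ Set.Icc (0 : ℝ) 1, DifferentiableAt ℝ (deriv f) s)
    (hf0 : f 0 = 0) (hf1 : f 1 = 1)
    (hd0 : deriv f 0 = 0) (hd1 : deriv f 1 = 0)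
    (hdpos : ∀ s : ℝ, 0 < s → s < 1 → 0 < deriv f s)
    (hstar : sstar ∈ Set.Ioo (0 : ℝ) 1)
    (hconv : ∀ s : ℝ, 0 < s → s < sstar → 0 < deriv (deriv f) s)
    (hconc : ∀ s : ℝ, sstar < s → s < 1 → deriv (deriv f) s < 0)
    (hdag : ∃ s1 ∈ Set.Ioo (0 : ℝ) sstar, ∃ s2 ∈ Set.Ioo sstar (1 : ℝ),
      deriv f s1 = 1 ∧ deriv f s2 = 1)
    (Λ : ℝ) (hΛ : Λ < 0 ∨ 1 < Λ) :
    (f sstar - Λ) / (sstar - Λ) < deriv f sstar := by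
  obtain ⟨h0, h1⟩ := hstar
  have hcont : ContinuousOn f (Set.Icc 0 1) :=
    fun s hs => (hdiff s hs).continuousAt.continuousWithinAt
  have hcont' : ContinuousOn (deriv f) (Set.Icc 0 1) :=
    fun s hs => (hdiff2 s hs).continuousAt.continuousWithinAt
  have hmono : StrictMonoOn (deriv f) (Set.Icc 0 sstar) := by
    refine strictMonoOn_of_deriv_pos (convex_Icc 0 sstar)
      (hcont'.mono (Set.Icc_subset_Icc_right h1.le)) fun s hs => ?_
    rw [interior_Icc] at hs
    exact hconv s hs.1 hs.2
  have hanti : StrictAntiOn (deriv f) (Set.Icc sstar 1) := by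
    refine strictAntiOn_of_deriv_neg (convex_Icc sstar 1)
      (hcont'.mono (Set.Icc_subset_Icc_left h0.le)) fun s hs => ?_
    rw [interior_Icc] at hs
    exact hconc s hs.1 hs.2
  have hone : 1 < deriv f sstar := by
    obtain ⟨s1, hs1, -, -, hd, -⟩ := hdag
    exact hd ▸ hmono ⟨hs1.1.le, hs1.2.le⟩ ⟨h0.le, le_rfl⟩ hs1.2
  rcases hΛ with hΛ | hΛ
  · have hleft : f sstar < deriv f sstar * sstar := by
      obtain ⟨c, hc, hceq⟩ := exists_deriv_eq_slope f h0
        (hcont.mono (Set.Icc_subset_Icc_right h1.le))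
        fun s hs => (hdiff s ⟨hs.1.le, (hs.2.trans h1).le⟩).differentiableWithinAt
      have hlt := hmono ⟨hc.1.le, hc.2.le⟩ ⟨h0.le, le_rfl⟩ hc.2
      rw [hceq, hf0, sub_zero, sub_zero] at hlt
      exact (div_lt_iff₀ h0).1 hlt
    rw [div_lt_iff₀ (by linarith)]
    nlinarith
  · have hright : 1 - f sstar < deriv f sstar * (1 - sstar) := by
      obtain ⟨c, hc, hceq⟩ := exists_deriv_eq_slope f h1
        (hcont.mono (Set.Icc_subset_Icc_left h0.le))
        fun s hs => (hdiff s ⟨(h0.trans hs.1).le, hs.2.le⟩).differentiableWithinAt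
      have hlt := hanti ⟨le_rfl, h1.le⟩ ⟨hc.1.le, hc.2.le⟩ hc.1
      rw [hceq, hf1] at hlt
      exact (div_lt_iff₀ (sub_pos.2 h1)).1 hlt
    rw [div_lt_iff_of_neg (by linarith)]
    nlinarith
end

section
/- Let f : ℝ → ℝ be twice differentiable on [0,1] satisfying the S-shape assumption: f(0) = 0, f(1) = 1, f′(0) = f′(1) = 0, f′(s) > 0 for 0 < s < 1, and there is s* ∈ (0,1) with f″(s) > 0 for 0 < s < s* and f″(s) < 0 for s* < s < 1; moreover there exist s^{†,1} ∈ (0, s*) and s^{†,2} ∈ (s*, 1) with f′(s^{†,1}) = f′(s^{†,2}) = 1. Then for every real Λ with Λ < 0 or Λ > 1, there exist points s¹ ∈ (0, s*) and s² ∈ (s*, 1) such that the coincidence function 𝒢_Λ(s) = f′(s) − (f(s) − Λ)/(s − Λ) vanishes at both: 𝒢_Λ(s¹) = 0 and 𝒢_Λ(s²) = 0. -/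
/-- Existence part of Lemma 4.2 (lema1): for an S-shaped fractional flow `f`
with inflection point `s*`, and any `Λ < 0` or `Λ > 1`, the coincidence
function `𝒢_Λ(s) = f′(s) − (f(s) − Λ)/(s − Λ)` vanishes at some point in
`(0, s*)` and at some point in `(s*, 1)`. -/
theorem coincidence_locus_exists (f : ℝ → ℝ) (sstar : ℝ)
    (hdiff : ∀ s ∈ Set.Icc (0 : ℝ) 1, DifferentiableAt ℝ f s)
    (hdiff2 : ∀ s ∈ Set.Icc (0 : ℝ) 1, DifferentiableAt ℝ (deriv f) s)
    (hf0 : f 0 = 0) (hf1 : f 1 = 1)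
    (hd0 : deriv f 0 = 0) (hd1 : deriv f 1 = 0)
    (hdpos : ∀ s : ℝ, 0 < s → s < 1 → 0 < deriv f s)
    (hstar : sstar ∈ Set.Ioo (0 : ℝ) 1)
    (hconv : ∀ s : ℝ, 0 < s → s < sstar → 0 < deriv (deriv f) s)
    (hconc : ∀ s : ℝ, sstar < s → s < 1 → deriv (deriv f) s < 0)
    (hdag : ∃ s1 ∈ Set.Ioo (0 : ℝ) sstar, ∃ s2 ∈ Set.Ioo sstar (1 : ℝ),
      deriv f s1 = 1 ∧ deriv f s2 = 1)
    (Λ : ℝ) (hΛ : Λ < 0 ∨ 1 < Λ) :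
    ∃ s1 ∈ Set.Ioo (0 : ℝ) sstar, ∃ s2 ∈ Set.Ioo sstar (1 : ℝ),
      deriv f s1 - (f s1 - Λ) / (s1 - Λ) = 0 ∧
      deriv f s2 - (f s2 - Λ) / (s2 - Λ) = 0 := by
  obtain ⟨h0, h1⟩ := hstar
  obtain ⟨a, ha, -, -, hda, -⟩ := hdag
  have hfc : ContinuousOn f (Set.Icc 0 1) :=
    fun s hs => (hdiff s hs).continuousAt.continuousWithinAt
  have hdc : ContinuousOn (deriv f) (Set.Icc 0 1) :=
    fun s hs => (hdiff2 s hs).continuousAt.continuousWithinAt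
  have hleft : Set.Icc 0 sstar ⊆ Set.Icc 0 1 := Set.Icc_subset_Icc_right h1.le
  have hright : Set.Icc sstar 1 ⊆ Set.Icc 0 1 := Set.Icc_subset_Icc_left h0.le
  have hmono : StrictMonoOn (deriv f) (Set.Icc 0 sstar) := by
    refine strictMonoOn_of_deriv_pos (convex_Icc _ _) (hdc.mono hleft) fun s hs => ?_
    rw [interior_Icc] at hs
    exact hconv s hs.1 hs.2
  have hanti : StrictAntiOn (deriv f) (Set.Icc sstar 1) := by
    refine strictAntiOn_of_deriv_neg (convex_Icc _ _) (hdc.mono hright) fun s hs => ?_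
    rw [interior_Icc] at hs
    exact hconc s hs.1 hs.2
  have hD : 1 < deriv f sstar :=
    hda ▸ hmono ⟨ha.1.le, ha.2.le⟩ (Set.right_mem_Icc.2 h0.le) ha.2
  -- The tangent at the inflection point is steeper than the chords to both endpoints.
  have hchord0 : f sstar < deriv f sstar * sstar := by
    obtain ⟨c, hc, hcd⟩ := exists_deriv_eq_slope f h0 (hfc.mono hleft) fun s hs =>
      (hdiff s ⟨hs.1.le, (hs.2.trans h1).le⟩).differentiableWithinAt
    have hlt := hmono ⟨hc.1.le, hc.2.le⟩ (Set.right_mem_Icc.2 h0.le) hc.2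
    rwa [hcd, hf0, sub_zero, sub_zero, div_lt_iff₀ h0] at hlt
  have hchord1 : 1 - f sstar < deriv f sstar * (1 - sstar) := by
    obtain ⟨c, hc, hcd⟩ := exists_deriv_eq_slope f h1 (hfc.mono hright) fun s hs =>
      (hdiff s ⟨(h0.trans hs.1).le, hs.2.le⟩).differentiableWithinAt
    have hlt := hanti (Set.left_mem_Icc.2 h1.le) ⟨hc.1.le, hc.2.le⟩ hc.1
    rwa [hcd, hf1, div_lt_iff₀ (sub_pos.2 h1)] at hlt
  have hne : ∀ s ∈ Set.Icc (0 : ℝ) 1, s - Λ ≠ 0 := by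
    rintro s ⟨hs0, hs1⟩ h
    rcases hΛ with h' | h' <;> linarith
  have hGc : ContinuousOn (fun s => deriv f s - (f s - Λ) / (s - Λ)) (Set.Icc 0 1) :=
    hdc.sub ((hfc.sub continuousOn_const).div (continuousOn_id.sub continuousOn_const) hne)
  have hG0 : deriv f 0 - (f 0 - Λ) / (0 - Λ) < 0 := by
    rw [hd0, hf0, div_self (hne 0 (by simp))]
    norm_num
  have hG1 : deriv f 1 - (f 1 - Λ) / (1 - Λ) < 0 := by
    rw [hd1, hf1, div_self (hne 1 (by simp))]
    norm_num
  have hGstar : 0 < deriv f sstar - (f sstar - Λ) / (sstar - Λ) := by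
    rw [sub_pos]
    rcases hΛ with h | h
    · rw [div_lt_iff₀ (by linarith)]
      nlinarith
    · rw [div_lt_iff_of_neg (by linarith)]
      nlinarith
  obtain ⟨s1, hs1, hz1⟩ := intermediate_value_Ioo h0.le (hGc.mono hleft) ⟨hG0, hGstar⟩
  obtain ⟨s2, hs2, hz2⟩ := intermediate_value_Ioo' h1.le (hGc.mono hright) ⟨hG1, hGstar⟩
  exact ⟨s1, hs1, s2, hs2, hz1, hz2⟩
end

section
/- Let f : ℝ → ℝ be twice differentiable on [0,1] satisfying the S-shape assumption: f(0) = 0, f(1) = 1, f′(0) = f′(1) = 0, f′(s) > 0 for 0 < s < 1, and there is s* ∈ (0,1) with f″(s) > 0 for 0 < s < s* and f″(s) < 0 for s* < s < 1. Let Λ be a real number with Λ < 0 or Λ > 1, and set 𝒢_Λ(s) = f′(s) − (f(s) − Λ)/(s − Λ). Then 𝒢_Λ has at most one zero in the interval (0, s*) and at most one zero in the interval (s*, 1). -/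
open Set

/-- If `f''` does not vanish on an interval `S` that avoids `c`, then
`s ↦ (s - c) f'(s) - f(s)` is injective on `S`, its derivative being `(s - c) f''(s)`. -/
lemma injOn_sub_mul_deriv_sub {f : ℝ → ℝ} {S : Set ℝ} [S.OrdConnected] {c : ℝ} (hc : c ∉ S)
    (hf : ∀ s ∈ S, DifferentiableAt ℝ f s) (hf' : ∀ s ∈ S, DifferentiableAt ℝ (deriv f) s)
    (hf'' : ∀ s ∈ S, deriv (deriv f) s ≠ 0) :
    InjOn (fun s => (s - c) * deriv f s - f s) S := by
  have hderiv : ∀ s ∈ S, HasDerivAt (fun s => (s - c) * deriv f s - f s)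
      ((s - c) * deriv (deriv f) s) s := fun s hs => by
    refine ((((hasDerivAt_id' s).sub_const c).fun_mul (hf' s hs).hasDerivAt).fun_sub
      (hf s hs).hasDerivAt).congr_deriv ?_
    ring
  intro a ha b hb hab
  wlog hlt : a < b generalizing a b
  · rcases (not_lt.mp hlt).eq_or_lt with h | h
    · exact h.symm
    · exact (this hb ha hab.symm h).symm
  have hsub : Icc a b ⊆ S := Set.Icc_subset S ha hb
  obtain ⟨s, hs, hs0⟩ := exists_hasDerivAt_eq_zero hlt
    (fun s hs => (hderiv s (hsub hs)).continuousAt.continuousWithinAt) hab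
    (fun s hs => hderiv s (hsub (Ioo_subset_Icc_self hs)))
  have hsS := hsub (Ioo_subset_Icc_self hs)
  rcases mul_eq_zero.mp hs0 with h | h
  · exact absurd (sub_eq_zero.mp h ▸ hsS) hc
  · exact absurd h (hf'' s hsS)

/-- The coincidence function has at most one zero on an interval that avoids `c` and on which
`f''` does not vanish. -/
lemma eq_of_coincidence_eq_zero {f : ℝ → ℝ} {S : Set ℝ} [S.OrdConnected] {c : ℝ} (hc : c ∉ S)
    (hf : ∀ s ∈ S, DifferentiableAt ℝ f s) (hf' : ∀ s ∈ S, DifferentiableAt ℝ (deriv f) s)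
    (hf'' : ∀ s ∈ S, deriv (deriv f) s ≠ 0) {a b : ℝ} (ha : a ∈ S) (hb : b ∈ S)
    (ha0 : deriv f a - (f a - c) / (a - c) = 0) (hb0 : deriv f b - (f b - c) / (b - c) = 0) :
    a = b := by
  have key : ∀ s ∈ S, deriv f s - (f s - c) / (s - c) = 0 →
      (s - c) * deriv f s - f s = -c := fun s hs h => by
    have hne : s - c ≠ 0 := sub_ne_zero.mpr fun h => hc (h ▸ hs)
    rw [sub_eq_zero.mp h, mul_div_cancel₀ _ hne]
    ring
  exact injOn_sub_mul_deriv_sub hc hf hf' hf'' ha hb ((key a ha ha0).trans (key b hb hb0).symm)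

/-- Uniqueness part of Lemma 4.2 (lema1): for an S-shaped fractional flow `f`
with inflection point `s*`, and any `Λ < 0` or `Λ > 1`, the coincidence
function `𝒢_Λ(s) = f′(s) − (f(s) − Λ)/(s − Λ)` has at most one zero in
`(0, s*)` and at most one zero in `(s*, 1)`. -/
theorem coincidence_locus_unique (f : ℝ → ℝ) (sstar : ℝ)
    (hdiff : ∀ s ∈ Set.Icc (0 : ℝ) 1, DifferentiableAt ℝ f s)
    (hdiff2 : ∀ s ∈ Set.Icc (0 : ℝ) 1, DifferentiableAt ℝ (deriv f) s)
    (hf0 : f 0 = 0) (hf1 : f 1 = 1)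
    (hd0 : deriv f 0 = 0) (hd1 : deriv f 1 = 0)
    (hdpos : ∀ s : ℝ, 0 < s → s < 1 → 0 < deriv f s)
    (hstar : sstar ∈ Set.Ioo (0 : ℝ) 1)
    (hconv : ∀ s : ℝ, 0 < s → s < sstar → 0 < deriv (deriv f) s)
    (hconc : ∀ s : ℝ, sstar < s → s < 1 → deriv (deriv f) s < 0)
    (Λ : ℝ) (hΛ : Λ < 0 ∨ 1 < Λ) :
    (∀ a ∈ Set.Ioo (0 : ℝ) sstar, ∀ b ∈ Set.Ioo (0 : ℝ) sstar,
      deriv f a - (f a - Λ) / (a - Λ) = 0 →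
      deriv f b - (f b - Λ) / (b - Λ) = 0 → a = b) ∧
    (∀ a ∈ Set.Ioo sstar (1 : ℝ), ∀ b ∈ Set.Ioo sstar (1 : ℝ),
      deriv f a - (f a - Λ) / (a - Λ) = 0 →
      deriv f b - (f b - Λ) / (b - Λ) = 0 → a = b) := by
  obtain ⟨h0, h1⟩ := hstar
  have hleft : Ioo 0 sstar ⊆ Icc (0 : ℝ) 1 := fun s hs => ⟨hs.1.le, (hs.2.trans h1).le⟩
  have hright : Ioo sstar 1 ⊆ Icc (0 : ℝ) 1 := fun s hs => ⟨(h0.trans hs.1).le, hs.2.le⟩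
  have hΛ' : Λ ∉ Icc (0 : ℝ) 1 := fun h => hΛ.elim h.1.not_gt h.2.not_gt
  exact ⟨fun a ha b hb => eq_of_coincidence_eq_zero (fun h => hΛ' (hleft h))
      (fun s hs => hdiff s (hleft hs)) (fun s hs => hdiff2 s (hleft hs))
      (fun s hs => (hconv s hs.1 hs.2).ne') ha hb,
    fun a ha b hb => eq_of_coincidence_eq_zero (fun h => hΛ' (hright h))
      (fun s hs => hdiff s (hright hs)) (fun s hs => hdiff2 s (hright hs))
      (fun s hs => (hconc s hs.1 hs.2).ne) ha hb⟩
end
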